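/- arXiv:2512.04670 — 2 statements merged into one kernel-verified Lean document; each statement's English description precedes it below -/
import Mathlib

section
/- (Uniqueness for the forced heat equation on the half-line.) Let u₀ : ℝ → ℂ be a Schwartz function, g₀ : ℝ → ℂ be infinitely differentiable, and f : ℝ² → ℂ be a Schwartz function, satisfying the compatibility conditions u₀(0) = g₀(0) and u₀''(0) + f(0,0) = g₀'(0). Suppose V and W are functions defined on Q̄ ∖ {(0,0)}, each twice continuously differentiable there, and each satisfies: (i) ∂V/∂t − ∂²V/∂x² = f(x,t) at every point of Q; (ii) lim_{t→0⁺} V(x,t) = u₀(x) for every x > 0; (iii) lim_{x→0⁺} V(x,t) = g₀(t) for every t > 0; (iv) for every t > 0, lim_{x→∞} V(x,t) = 0 and sup_{x ≥ 1} |∂V/∂x (x,t)| < ∞; (v) for every T > 0 there exists a Lebesgue-integrable function B_T : (0,∞) → ℝ such that |V(x,t)|² ≤ B_T(x) and |∂V/∂t (x,t)|² ≤ B_T(x) for all x > 0 and all 0 < t ≤ T. Then V = W on Q. -/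
open MeasureTheory Filter Set

/-- The closed quarter-plane minus the corner: `Q̄ ∖ {(0,0)}`. -/
def closedQuarterMinusCorner : Set (ℝ × ℝ) :=
  {p : ℝ × ℝ | 0 ≤ p.1 ∧ 0 ≤ p.2} \ {(0, 0)}

/-- `V` is an admissible solution of the forced heat IBVP on the half-line with forcing
`f`, initial datum `u₀` and boundary datum `g₀`:  it is `C²` on `Q̄ ∖ {(0,0)}`, solves
`∂V/∂t − ∂²V/∂x² = f` on `Q`, attains the initial and boundary data as one-sided
limits, vanishes (with bounded `x`-derivative) as `x → ∞`, and `|V|²`, `|∂V/∂t|²` are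
dominated, uniformly for `0 < t ≤ T`, by an integrable function of `x`. -/
def IsAdmissibleHeatSolution (f : ℝ × ℝ → ℂ) (u₀ g₀ : ℝ → ℂ) (V : ℝ → ℝ → ℂ) : Prop :=
  ContDiffOn ℝ 2 (fun p : ℝ × ℝ => V p.1 p.2) closedQuarterMinusCorner ∧
  (∀ x t : ℝ, 0 < x → 0 < t →
    deriv (fun s => V x s) t - iteratedDeriv 2 (fun y => V y t) x = f (x, t)) ∧
  (∀ x : ℝ, 0 < x → Tendsto (fun t => V x t) (nhdsWithin 0 (Ioi 0)) (nhds (u₀ x))) ∧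
  (∀ t : ℝ, 0 < t → Tendsto (fun x => V x t) (nhdsWithin 0 (Ioi 0)) (nhds (g₀ t))) ∧
  (∀ t : ℝ, 0 < t →
    Tendsto (fun x => V x t) atTop (nhds (0 : ℂ)) ∧
    ∃ M : ℝ, ∀ x : ℝ, 1 ≤ x → ‖deriv (fun y => V y t) x‖ ≤ M) ∧
  (∀ T : ℝ, 0 < T → ∃ B : ℝ → ℝ, IntegrableOn B (Ioi 0) ∧
    ∀ x t : ℝ, 0 < x → 0 < t → t ≤ T →
      ‖V x t‖ ^ 2 ≤ B x ∧ ‖deriv (fun s => V x s) t‖ ^ 2 ≤ B x)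

lemma half_line_le (u u' u'' : ℝ → ℂ) (h1 : ∀ x, 0 < x → HasDerivAt u (u' x) x)
    (h2 : ∀ x, 0 < x → HasDerivAt u' (u'' x) x)
    (h0 : Tendsto (fun x => inner ℝ (u x) (u' x)) (nhdsWithin 0 (Ioi 0)) (nhds (0:ℝ)))
    (hinf : Tendsto (fun x => inner ℝ (u x) (u' x)) atTop (nhds (0:ℝ)))
    (hint : IntegrableOn (fun x => inner ℝ (u x) (u'' x)) (Ioi 0)) :
    ∫ x in Ioi (0:ℝ), inner ℝ (u x) (u'' x) ≤ 0 := by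
  have key : ∀ R : ℝ, 0 < R →
      ∫ x in (0:ℝ)..R, inner ℝ (u x) (u'' x) ≤ inner ℝ (u R) (u' R) := by
    intro R hR
    set g : ℝ → ℝ := (Ioi (0:ℝ)).indicator (fun x => inner ℝ (u x) (u' x)) with hg
    have hgx : ∀ x, 0 < x → HasDerivAt g (inner ℝ (u x) (u'' x) + inner ℝ (u' x) (u' x)) x := by
      intro x hx
      refine ((h1 x hx).inner ℝ (h2 x hx)).congr_of_eventuallyEq ?_
      filter_upwards [Ioi_mem_nhds hx] with y hy
      exact indicator_of_mem hy _
    have h := intervalIntegral.integral_le_sub_of_hasDeriv_right_of_le (a := 0) (b := R) (g := g)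
      (g' := fun x => inner ℝ (u x) (u'' x) + inner ℝ (u' x) (u' x))
      (φ := fun x => inner ℝ (u x) (u'' x)) hR.le ?_ ?_ ?_ ?_
    · have e0 : g 0 = 0 := by simp [hg]
      have eR : g R = inner ℝ (u R) (u' R) := indicator_of_mem (show R ∈ Ioi (0:ℝ) from hR) _
      rw [e0, eR, sub_zero] at h
      exact h
    · intro x hx
      rcases hx.1.eq_or_lt with h | h
      · subst h
        have : ContinuousWithinAt g (Ici 0) 0 := by
          rw [← continuousWithinAt_Ioi_iff_Ici]
          have e0 : g 0 = 0 := by simp [hg]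
          rw [ContinuousWithinAt, e0]
          refine h0.congr' ?_
          filter_upwards [self_mem_nhdsWithin] with y hy
          have e : g y = inner ℝ (u y) (u' y) := indicator_of_mem hy _
          exact e.symm
        exact this.mono Icc_subset_Ici_self
      · exact (hgx x h).continuousAt.continuousWithinAt
    · intro x hx
      exact (hgx x hx.1).hasDerivWithinAt
    · rw [integrableOn_Icc_iff_integrableOn_Ioc]
      exact hint.mono_set Ioc_subset_Ioi_self
    · intro x _
      have : (0:ℝ) ≤ inner ℝ (u' x) (u' x) := real_inner_self_nonneg
      linarith
  refine le_of_tendsto_of_tendsto (intervalIntegral_tendsto_integral_Ioi 0 hint tendsto_id) hinf ?_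
  filter_upwards [eventually_gt_atTop 0] with R hR
  exact key R hR

lemma heat_core (U Ut Ux : ℝ → ℝ → ℂ)
    (h1 : ∀ x t : ℝ, 0 < x → 0 < t → HasDerivAt (fun s => U x s) (Ut x t) t)
    (h2 : ∀ x t : ℝ, 0 < x → 0 < t → HasDerivAt (fun y => U y t) (Ux x t) x)
    (h3 : ∀ x t : ℝ, 0 < x → 0 < t → HasDerivAt (fun y => Ux y t) (Ut x t) x)
    (hi : ∀ x : ℝ, 0 < x → Tendsto (fun t => U x t) (nhdsWithin 0 (Ioi 0)) (nhds (0:ℂ)))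
    (h0 : ∀ t : ℝ, 0 < t →
      Tendsto (fun x => inner ℝ (U x t) (Ux x t)) (nhdsWithin 0 (Ioi 0)) (nhds (0:ℝ)))
    (hinf : ∀ t : ℝ, 0 < t → Tendsto (fun x => inner ℝ (U x t) (Ux x t)) atTop (nhds (0:ℝ)))
    (hB : ∀ T : ℝ, 0 < T → ∃ B : ℝ → ℝ, IntegrableOn B (Ioi 0) ∧
      ∀ x t : ℝ, 0 < x → 0 < t → t ≤ T → ‖U x t‖ ^ 2 ≤ B x ∧ ‖Ut x t‖ ^ 2 ≤ B x) :
    ∀ x t : ℝ, 0 < x → 0 < t → U x t = 0 := by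
  have hcont : ∀ t : ℝ, 0 < t → ContinuousOn (fun x => U x t) (Ioi 0) := fun t ht x hx =>
    (h2 x t hx ht).continuousAt.continuousWithinAt
  have hm : ∀ t : ℝ, 0 < t → AEStronglyMeasurable (fun x => ‖U x t‖ ^ 2)
      (volume.restrict (Ioi 0)) := fun t ht =>
    ((hcont t ht).norm.pow 2).aestronglyMeasurable measurableSet_Ioi
  have hmt : ∀ t : ℝ, 0 < t → AEStronglyMeasurable (fun x => Ut x t) (volume.restrict (Ioi 0)) := by
    intro t ht
    refine (aestronglyMeasurable_deriv (fun y => Ux y t) _).congr ?_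
    filter_upwards [ae_restrict_mem measurableSet_Ioi] with x hx
    exact (h3 x t hx ht).deriv
  have hint : ∀ t : ℝ, 0 < t → IntegrableOn (fun x => ‖U x t‖ ^ 2) (Ioi 0) := by
    intro t ht
    obtain ⟨B, hBi, hBb⟩ := hB t ht
    refine Integrable.mono' hBi (hm t ht) ?_
    filter_upwards [ae_restrict_mem measurableSet_Ioi] with x hx
    rw [Real.norm_of_nonneg (by positivity)]
    exact (hBb x t hx ht le_rfl).1
  set E : ℝ → ℝ := fun t => ∫ x in Ioi (0:ℝ), ‖U x t‖ ^ 2 with hE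
  have hder : ∀ t : ℝ, 0 < t → ∃ d, d ≤ 0 ∧ HasDerivAt E d t := by
    intro t ht
    obtain ⟨B, hBi, hBb⟩ := hB (t+1) (by linarith)
    have h := hasDerivAt_integral_of_dominated_loc_of_deriv_le (μ := volume.restrict (Ioi (0:ℝ)))
      (F := fun t x => ‖U x t‖ ^ 2) (F' := fun t x => 2 * inner ℝ (U x t) (Ut x t))
      (bound := fun x => 2 * B x) (x₀ := t) (s := Ioo 0 (t+1))
      (Ioo_mem_nhds ht (by linarith)) ?_ (hint t ht) ?_ ?_ (hBi.const_mul 2) ?_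
    · refine ⟨_, ?_, h.2⟩
      have hi' : IntegrableOn (fun x => inner ℝ (U x t) (Ut x t)) (Ioi 0) := by
        have := h.1.const_mul (1/2)
        refine this.congr (ae_of_all _ fun x => ?_)
        simp only
        ring
      have := half_line_le _ _ _ (fun x hx => h2 x t hx ht) (fun x hx => h3 x t hx ht)
        (h0 t ht) (hinf t ht) hi'
      rw [integral_const_mul]
      linarith
    · filter_upwards [Ioi_mem_nhds ht] with s hs
      exact hm s hs
    · exact (((hcont t ht).aestronglyMeasurable measurableSet_Ioi).inner (hmt t ht)).const_mul 2
    · filter_upwards [ae_restrict_mem measurableSet_Ioi] with x hx s hs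
      have hb := hBb x s hx hs.1 hs.2.le
      have hn := norm_inner_le_norm (𝕜 := ℝ) (U x s) (Ut x s)
      rw [norm_mul, Real.norm_ofNat]
      nlinarith [sq_nonneg (‖U x s‖ - ‖Ut x s‖)]
    · filter_upwards [ae_restrict_mem measurableSet_Ioi] with x hx s hs
      exact (h1 x s hx hs.1).norm_sq
  choose! d hd0 hd using hder
  have hanti : AntitoneOn E (Ioi 0) := by
    refine antitoneOn_of_deriv_nonpos (convex_Ioi 0) (fun t ht => (hd t ht).continuousAt.continuousWithinAt)
      ?_ ?_
    · rw [interior_Ioi]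
      exact fun t ht => (hd t ht).differentiableAt.differentiableWithinAt
    · rw [interior_Ioi]
      intro t ht
      rw [(hd t ht).deriv]
      exact hd0 t ht
  have hlim : Tendsto E (nhdsWithin 0 (Ioi 0)) (nhds 0) := by
    obtain ⟨B, hBi, hBb⟩ := hB 1 one_pos
    have := tendsto_integral_filter_of_dominated_convergence (μ := volume.restrict (Ioi (0:ℝ)))
      (l := nhdsWithin (0:ℝ) (Ioi 0)) (F := fun t x => ‖U x t‖ ^ 2) (f := fun _ => (0:ℝ)) B
      ?_ ?_ hBi ?_
    · simpa using this
    · filter_upwards [self_mem_nhdsWithin] with s hs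
      exact hm s hs
    · filter_upwards [Ioo_mem_nhdsGT one_pos] with s hs
      filter_upwards [ae_restrict_mem measurableSet_Ioi] with x hx
      rw [Real.norm_of_nonneg (by positivity)]
      exact (hBb x s hx hs.1 hs.2.le).1
    · filter_upwards [ae_restrict_mem measurableSet_Ioi] with x hx
      simpa using (hi x hx).norm.pow 2
  intro x t hx ht
  have hE0 : E t = 0 := by
    refine le_antisymm ?_ (integral_nonneg fun x => by positivity)
    refine ge_of_tendsto hlim ?_
    filter_upwards [Ioo_mem_nhdsGT ht] with s hs
    exact hanti hs.1 ht hs.2.le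
  have hae := (setIntegral_eq_zero_iff_of_nonneg_ae (ae_of_all _ fun x => by positivity)
    (hint t ht)).1 hE0
  have := Measure.eqOn_open_of_ae_eq hae isOpen_Ioi ((hcont t ht).norm.pow 2) continuousOn_const hx
  simpa using this

lemma slice_facts {f : ℝ × ℝ → ℂ} {u₀ g₀ : ℝ → ℂ} {V : ℝ → ℝ → ℂ}
    (hV : IsAdmissibleHeatSolution f u₀ g₀ V) :
    (∀ x t : ℝ, 0 < x → 0 < t → HasDerivAt (fun s => V x s) (deriv (fun s => V x s) t) t) ∧
    (∀ x t : ℝ, 0 < x → 0 < t → HasDerivAt (fun y => V y t) (deriv (fun y => V y t) x) x) ∧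
    (∀ x t : ℝ, 0 < x → 0 < t → HasDerivAt (fun z => deriv (fun y => V y t) z)
      (deriv (fun s => V x s) t - f (x, t)) x) ∧
    (∀ t, 0 < t → ∃ K : ℝ, ∀ᶠ x in nhdsWithin 0 (Ioi 0), ‖deriv (fun y => V y t) x‖ ≤ K) := by
  obtain ⟨hc, hpde, -⟩ := hV
  have hat : ∀ x t : ℝ, 0 < x → 0 < t → ContDiffAt ℝ 2 (fun p : ℝ × ℝ => V p.1 p.2) (x, t) := by
    intro x t hx ht
    refine hc.contDiffAt ?_
    have : Ioi (0:ℝ) ×ˢ Ioi (0:ℝ) ∈ nhds (x, t) := prod_mem_nhds (Ioi_mem_nhds hx) (Ioi_mem_nhds ht)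
    filter_upwards [this] with p hp
    refine ⟨⟨hp.1.le, hp.2.le⟩, ?_⟩
    rintro rfl
    exact lt_irrefl (0:ℝ) hp.1
  have hslice : ∀ x t : ℝ, 0 < x → 0 < t → ContDiffAt ℝ 2 (fun y => V y t) x := by
    intro x t hx ht
    exact (hat x t hx ht).comp (f := fun y : ℝ => (y, t)) x (by fun_prop)
  refine ⟨?_, ?_, ?_, ?_⟩
  · intro x t hx ht
    have : ContDiffAt ℝ 2 (fun s => V x s) t :=
      (hat x t hx ht).comp (f := fun s : ℝ => (x, s)) t (by fun_prop)
    exact (this.differentiableAt (by norm_num)).hasDerivAt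
  · intro x t hx ht
    exact ((hslice x t hx ht).differentiableAt (by norm_num)).hasDerivAt
  · intro x t hx ht
    have e := hpde x t hx ht
    have hd : DifferentiableAt ℝ (deriv (fun y => V y t)) x := by
      have : ContDiffAt ℝ 1 (deriv (fun y => V y t)) x :=
        ((hslice x t hx ht).fderiv_right (m := 1) (by norm_num)).clm_apply contDiffAt_const
      exact this.differentiableAt (by norm_num)
    have e2 : deriv (fun s => V x s) t - f (x, t) = deriv (deriv (fun y => V y t)) x := by
      rw [← e, iteratedDeriv_succ, iteratedDeriv_one]
      ring
    rw [e2]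
    exact hd.hasDerivAt
  · intro t ht
    have hcw : ContDiffOn ℝ 2 (fun y => V y t) (Ici 0) := by
      refine hc.comp (f := fun y : ℝ => (y, t)) (by fun_prop) ?_
      intro y hy
      refine ⟨⟨hy, ht.le⟩, ?_⟩
      intro h
      exact ht.ne' (Prod.ext_iff.1 h).2
    obtain ⟨K, s, hs, hK⟩ := ((hcw 0 self_mem_Ici).of_le (by norm_num :
      (1 : WithTop ℕ∞) ≤ 2)).exists_lipschitzOnWith (convex_Ici 0)
    refine ⟨K, ?_⟩
    have hs' : s ∈ nhdsWithin (0:ℝ) (Ioi 0) := nhdsWithin_mono _ Ioi_subset_Ici_self hs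
    obtain ⟨b, hb, hbs⟩ := (mem_nhdsGT_iff_exists_Ioo_subset).1 hs'
    filter_upwards [Ioo_mem_nhdsGT hb] with x hx
    exact norm_deriv_le_of_lipschitzOn (mem_of_superset (Ioo_mem_nhds hx.1 hx.2) hbs) hK

lemma tendsto_inner_zero_of_bdd {l : Filter ℝ} {u v : ℝ → ℂ} (hu : Tendsto u l (nhds 0))
    {K : ℝ} (hv : ∀ᶠ x in l, ‖v x‖ ≤ K) :
    Tendsto (fun x => inner ℝ (u x) (v x)) l (nhds (0:ℝ)) := by
  have h : Tendsto (fun x => ‖u x‖ * K) l (nhds 0) := by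
    simpa using hu.norm.mul_const K
  refine squeeze_zero_norm' ?_ h
  filter_upwards [hv] with x hx
  exact (norm_inner_le_norm _ _).trans (mul_le_mul_of_nonneg_left hx (norm_nonneg _))

lemma norm_sub_sq_bound (a b : ℂ) {A B : ℝ} (ha : ‖a‖ ^ 2 ≤ A) (hb : ‖b‖ ^ 2 ≤ B) :
    ‖a - b‖ ^ 2 ≤ 2 * A + 2 * B := by
  have := norm_sub_le a b
  nlinarith [sq_nonneg (‖a‖ - ‖b‖), norm_nonneg (a - b), norm_nonneg a, norm_nonneg b]

/-- Uniqueness for the forced heat equation on the half-line, under the compatibility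
conditions `u₀(0) = g₀(0)` and `u₀''(0) + f(0,0) = g₀'(0)`. -/
theorem heat_uniqueness (u₀ : SchwartzMap ℝ ℂ) (g₀ : ℝ → ℂ)
    (hg₀ : ContDiff ℝ (⊤ : ℕ∞) g₀) (f : SchwartzMap (ℝ × ℝ) ℂ)
    (hcomp₁ : u₀ 0 = g₀ 0)
    (hcomp₂ : deriv (deriv (u₀ : ℝ → ℂ)) 0 + f (0, 0) = deriv g₀ 0)
    (V W : ℝ → ℝ → ℂ)
    (hV : IsAdmissibleHeatSolution (f : ℝ × ℝ → ℂ) (u₀ : ℝ → ℂ) g₀ V)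
    (hW : IsAdmissibleHeatSolution (f : ℝ × ℝ → ℂ) (u₀ : ℝ → ℂ) g₀ W) :
    ∀ x t : ℝ, 0 < x → 0 < t → V x t = W x t := by
  obtain ⟨v1, v2, v3, v4⟩ := slice_facts hV
  obtain ⟨w1, w2, w3, w4⟩ := slice_facts hW
  obtain ⟨-, -, vi, vb, vinf, vB⟩ := hV
  obtain ⟨-, -, wi, wb, winf, wB⟩ := hW
  intro x t hx ht
  refine sub_eq_zero.1 (heat_core (fun x t => V x t - W x t)
    (fun x t => deriv (fun s => V x s) t - deriv (fun s => W x s) t)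
    (fun x t => deriv (fun y => V y t) x - deriv (fun y => W y t) x)
    ?_ ?_ ?_ ?_ ?_ ?_ ?_ x t hx ht)
  · exact fun x t hx ht => (v1 x t hx ht).sub (w1 x t hx ht)
  · exact fun x t hx ht => (v2 x t hx ht).sub (w2 x t hx ht)
  · intro x t hx ht
    have := (v3 x t hx ht).sub (w3 x t hx ht)
    rwa [sub_sub_sub_cancel_right] at this
  · intro x hx
    simpa using (vi x hx).sub (wi x hx)
  · intro t ht
    obtain ⟨K, hK⟩ := v4 t ht
    obtain ⟨L, hL⟩ := w4 t ht
    refine tendsto_inner_zero_of_bdd (K := K + L) (by simpa using (vb t ht).sub (wb t ht)) ?_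
    filter_upwards [hK, hL] with x h1 h2
    exact (norm_sub_le _ _).trans (add_le_add h1 h2)
  · intro t ht
    obtain ⟨hv, K, hK⟩ := vinf t ht
    obtain ⟨hw, L, hL⟩ := winf t ht
    refine tendsto_inner_zero_of_bdd (K := K + L) (by simpa using hv.sub hw) ?_
    filter_upwards [eventually_ge_atTop 1] with x h1
    exact (norm_sub_le _ _).trans (add_le_add (hK x h1) (hL x h1))
  · intro T hT
    obtain ⟨A, hA, hA'⟩ := vB T hT
    obtain ⟨B, hB, hB'⟩ := wB T hT
    refine ⟨fun x => 2 * A x + 2 * B x, (hA.const_mul 2).add (hB.const_mul 2), ?_⟩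
    intro x t hx ht htT
    have a := hA' x t hx ht htT
    have b := hB' x t hx ht htT
    exact ⟨norm_sub_sq_bound _ _ a.1 b.1, norm_sub_sq_bound _ _ a.2 b.2⟩
end

section
/- (Uniqueness for the forced linear KdV equation on the half-line.) Let u₀ : ℝ → ℂ be a Schwartz function, g₀ : ℝ → ℂ be infinitely differentiable, and f : ℝ² → ℂ be a Schwartz function, satisfying the compatibility conditions u₀(0) = g₀(0) and g₀'(0) = −u₀'''(0) + f(0,0). Suppose V and W are functions defined on Q̄ ∖ {(0,0)}, each three times continuously differentiable there, and each satisfies: (i) ∂V/∂t + ∂³V/∂x³ = f(x,t) at every point of Q; (ii) lim_{t→0⁺} V(x,t) = u₀(x) for every x > 0; (iii) lim_{x→0⁺} V(x,t) = g₀(t) for every t > 0; (iv) for every t > 0, lim_{x→∞} V(x,t) = 0, lim_{x→∞} ∂V/∂x (x,t) = 0, and sup_{x ≥ 1} |∂²V/∂x² (x,t)| < ∞; (v) for every T > 0 there exists a Lebesgue-integrable function B_T : (0,∞) → ℝ such that |V(x,t)|² ≤ B_T(x) and |∂V/∂t (x,t)|² ≤ B_T(x) for all x > 0 and all 0 < t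 ≤ T. Then V = W on Q. -/
open MeasureTheory Filter Set

/-- `V` is an admissible solution of the forced linear KdV IBVP on the half-line with
forcing `f`, initial datum `u₀` and boundary datum `g₀`:  it is `C³` on `Q̄ ∖ {(0,0)}`,
solves `∂V/∂t + ∂³V/∂x³ = f` on `Q`, attains the initial and boundary data as one-sided
limits, vanishes together with its first `x`-derivative (with bounded second
`x`-derivative) as `x → ∞`, and `|V|²`, `|∂V/∂t|²` are dominated, uniformly for
`0 < t ≤ T`, by an integrable function of `x`. -/
def IsAdmissibleKdVSolution (f : ℝ × ℝ → ℂ) (u₀ g₀ : ℝ → ℂ) (V : ℝ → ℝ → ℂ) : Prop :=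
  ContDiffOn ℝ 3 (fun p : ℝ × ℝ => V p.1 p.2) closedQuarterMinusCorner ∧
  (∀ x t : ℝ, 0 < x → 0 < t →
    deriv (fun s => V x s) t + iteratedDeriv 3 (fun y => V y t) x = f (x, t)) ∧
  (∀ x : ℝ, 0 < x → Tendsto (fun t => V x t) (nhdsWithin 0 (Ioi 0)) (nhds (u₀ x))) ∧
  (∀ t : ℝ, 0 < t → Tendsto (fun x => V x t) (nhdsWithin 0 (Ioi 0)) (nhds (g₀ t))) ∧
  (∀ t : ℝ, 0 < t →
    Tendsto (fun x => V x t) atTop (nhds (0 : ℂ)) ∧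
    Tendsto (fun x => deriv (fun y => V y t) x) atTop (nhds (0 : ℂ)) ∧
    ∃ M : ℝ, ∀ x : ℝ, 1 ≤ x → ‖iteratedDeriv 2 (fun y => V y t) x‖ ≤ M) ∧
  (∀ T : ℝ, 0 < T → ∃ B : ℝ → ℝ, IntegrableOn B (Ioi 0) ∧
    ∀ x t : ℝ, 0 < x → 0 < t → t ≤ T →
      ‖V x t‖ ^ 2 ≤ B x ∧ ‖deriv (fun s => V x s) t‖ ^ 2 ≤ B x)

lemma cq_mem_nhds {x t : ℝ} (hx : 0 < x) (ht : 0 < t) :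
    closedQuarterMinusCorner ∈ nhds (x, t) := by
  have h : (Ioi (0:ℝ)) ×ˢ (Ioi (0:ℝ)) ∈ nhds (x, t) :=
    prod_mem_nhds (Ioi_mem_nhds hx) (Ioi_mem_nhds ht)
  refine mem_of_superset h ?_
  rintro ⟨a, b⟩ ⟨ha, hb⟩
  refine ⟨⟨le_of_lt ha, le_of_lt hb⟩, ?_⟩
  intro h0
  have h1 : a = 0 := congrArg Prod.fst h0
  exact (ne_of_gt ha) h1

lemma slice_t {V : ℝ → ℝ → ℂ}
    (h : ContDiffOn ℝ 3 (fun p : ℝ × ℝ => V p.1 p.2) closedQuarterMinusCorner)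
    {x t : ℝ} (hx : 0 < x) (ht : 0 < t) : DifferentiableAt ℝ (fun s => V x s) t := by
  have h1 : ContDiffAt ℝ 3 (fun p : ℝ × ℝ => V p.1 p.2) (x, t) := h.contDiffAt (cq_mem_nhds hx ht)
  have h2 : ContDiffAt ℝ 3 (fun s : ℝ => (x, s)) t := by fun_prop
  have h3 := ContDiffAt.comp t h1 h2
  exact h3.differentiableAt (by norm_num)

lemma slice_x {V : ℝ → ℝ → ℂ}
    (h : ContDiffOn ℝ 3 (fun p : ℝ × ℝ => V p.1 p.2) closedQuarterMinusCorner)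
    {t : ℝ} (ht : 0 < t) : ContDiffOn ℝ 3 (fun y => V y t) (Ici 0) := by
  have h2 : ContDiffOn ℝ 3 (fun s : ℝ => (s, t)) (Ici 0) := by fun_prop
  refine h.comp h2 ?_
  intro y hy
  refine ⟨⟨hy, ht.le⟩, ?_⟩
  intro h0
  have h1 : t = 0 := congrArg Prod.snd h0
  exact ht.ne' h1

lemma slice_x_at {V : ℝ → ℝ → ℂ}
    (h : ContDiffOn ℝ 3 (fun p : ℝ × ℝ => V p.1 p.2) closedQuarterMinusCorner)
    {x t : ℝ} (hx : 0 < x) (ht : 0 < t) : ContDiffAt ℝ 3 (fun y => V y t) x :=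
  (slice_x h ht).contDiffAt (Ici_mem_nhds hx)

lemma adm_sub {f : ℝ × ℝ → ℂ} {u g : ℝ → ℂ} {V W : ℝ → ℝ → ℂ}
    (hV : IsAdmissibleKdVSolution f u g V) (hW : IsAdmissibleKdVSolution f u g W) :
    IsAdmissibleKdVSolution (fun _ => 0) (fun _ => 0) (fun _ => 0)
      (fun x t => V x t - W x t) := by
  obtain ⟨cV, eV, iV, bV, dV, BV⟩ := hV
  obtain ⟨cW, eW, iW, bW, dW, BW⟩ := hW
  have hdt : ∀ x t : ℝ, 0 < x → 0 < t → deriv (fun s => V x s - W x s) t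
      = deriv (fun s => V x s) t - deriv (fun s => W x s) t := fun x t hx ht =>
    deriv_fun_sub (slice_t cV hx ht) (slice_t cW hx ht)
  have hdx : ∀ (n : ℕ) (_ : n ≤ 3) (x t : ℝ), 0 < x → 0 < t →
      iteratedDeriv n (fun y => V y t - W y t) x
      = iteratedDeriv n (fun y => V y t) x - iteratedDeriv n (fun y => W y t) x := by
    intro n hn x t hx ht
    have hn' : ((n : ℕ) : WithTop ℕ∞) ≤ 3 := by exact_mod_cast hn
    exact iteratedDeriv_sub ((slice_x_at cV hx ht).of_le hn') ((slice_x_at cW hx ht).of_le hn')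
  refine ⟨cV.sub cW, ?_, ?_, ?_, ?_, ?_⟩
  · intro x t hx ht
    rw [hdt x t hx ht, hdx 3 le_rfl x t hx ht]
    have := eV x t hx ht
    have := eW x t hx ht
    linear_combination eV x t hx ht - eW x t hx ht
  · intro x hx
    simpa using (iV x hx).sub (iW x hx)
  · intro t ht
    simpa using (bV t ht).sub (bW t ht)
  · intro t ht
    obtain ⟨a1, a2, M, hM⟩ := dV t ht
    obtain ⟨b1, b2, N, hN⟩ := dW t ht
    refine ⟨by simpa using a1.sub b1, ?_, M + N, ?_⟩
    · have h3 := a2.sub b2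
      rw [sub_zero] at h3
      refine h3.congr' ?_
      filter_upwards [eventually_gt_atTop 0] with x hx
      have := hdx 1 (by norm_num) x t hx ht
      simpa only [iteratedDeriv_one] using this.symm
    · intro x hx
      rw [hdx 2 (by norm_num) x t (by linarith) ht]
      exact (norm_sub_le _ _).trans (add_le_add (hM x hx) (hN x hx))
  · intro T hT
    obtain ⟨B, hB, hB'⟩ := BV T hT
    obtain ⟨C, hC, hC'⟩ := BW T hT
    have key : ∀ a b : ℂ, ‖a - b‖ ^ 2 ≤ 2 * (‖a‖ ^ 2 + ‖b‖ ^ 2) := by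
      intro a b
      have h1 := norm_sub_le a b
      have h2 := norm_nonneg (a - b)
      nlinarith [sq_nonneg (‖a‖ - ‖b‖)]
    refine ⟨fun x => 2 * (B x + C x), (hB.add hC).const_mul 2, ?_⟩
    intro x t hx ht htT
    have h1 := hB' x t hx ht htT
    have h2 := hC' x t hx ht htT
    refine ⟨(key _ _).trans (by linarith), ?_⟩
    rw [hdt x t hx ht]
    exact (key _ _).trans (by linarith)

lemma energy_1d {v : ℝ → ℂ} (hv : ContDiffOn ℝ 3 v (Ici 0))
    (h0 : Tendsto v (nhdsWithin 0 (Ioi 0)) (nhds 0))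
    (hi : Tendsto v atTop (nhds 0)) (hi1 : Tendsto (fun x => deriv v x) atTop (nhds 0))
    (hi2 : ∃ M : ℝ, ∀ x : ℝ, 1 ≤ x → ‖iteratedDeriv 2 v x‖ ≤ M)
    (hint : IntegrableOn (fun x => 2 * inner ℝ (v x) (iteratedDeriv 3 v x)) (Ioi 0)) :
    0 ≤ ∫ x in Ioi (0:ℝ), 2 * inner ℝ (v x) (iteratedDeriv 3 v x) := by
  set D : ℕ → ℝ → ℂ := fun k => iteratedDerivWithin k v (Ici 0) with hD
  have hu : UniqueDiffOn ℝ (Ici (0:ℝ)) := uniqueDiffOn_Ici 0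
  have hDe : ∀ k : ℕ, k ≤ 3 → ∀ x : ℝ, 0 < x → D k x = iteratedDeriv k v x := by
    intro k hk x hx
    have hk' : ((k : ℕ) : WithTop ℕ∞) ≤ 3 := by exact_mod_cast hk
    exact iteratedDerivWithin_eq_iteratedDeriv hu
      ((hv.contDiffAt (Ici_mem_nhds hx)).of_le hk') hx.le
  have hD0 : D 0 = v := iteratedDerivWithin_zero
  have hder : ∀ k : ℕ, k < 3 → ∀ x : ℝ, 0 < x → HasDerivAt (D k) (D (k+1) x) x := by
    intro k hk x hx
    have hk' : ((k : ℕ) : WithTop ℕ∞) < 3 := by exact_mod_cast hk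
    have h1 := (hv.differentiableOn_iteratedDerivWithin hk' hu x hx.le).hasDerivWithinAt
    rw [← iteratedDerivWithin_succ] at h1
    exact h1.hasDerivAt (Ici_mem_nhds hx)
  have hcont : ∀ k : ℕ, k ≤ 3 → ContinuousOn (D k) (Ici 0) := by
    intro k hk
    have hk' : ((k : ℕ) : WithTop ℕ∞) ≤ 3 := by exact_mod_cast hk
    exact hv.continuousOn_iteratedDerivWithin hk' hu
  have hv0 : v 0 = 0 := by
    have h1 : Tendsto v (nhdsWithin 0 (Ioi 0)) (nhds (v 0)) :=
      ((hv.continuousOn 0 self_mem_Ici).mono Ioi_subset_Ici_self)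
    exact tendsto_nhds_unique h1 h0
  set h : ℝ → ℝ := fun x => 2 * inner ℝ (D 0 x) (D 2 x) - ‖D 1 x‖ ^ 2 with hh
  have hc : ContinuousWithinAt h (Ici 0) 0 := by
    have c0 := hcont 0 (by norm_num) 0 self_mem_Ici
    have c1 := hcont 1 (by norm_num) 0 self_mem_Ici
    have c2 := hcont 2 (by norm_num) 0 self_mem_Ici
    exact ((ContinuousWithinAt.inner (𝕜 := ℝ) c0 c2).const_mul 2).sub (c1.norm.pow 2)
  have hd : ∀ x ∈ Ioi (0:ℝ), HasDerivAt h (2 * inner ℝ (v x) (iteratedDeriv 3 v x)) x := by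
    intro x hx
    have d0 := hder 0 (by norm_num) x hx
    have d1 := hder 1 (by norm_num) x hx
    have d2 := hder 2 (by norm_num) x hx
    have h1 := ((d0.inner ℝ d2).const_mul 2).sub d1.norm_sq
    refine h1.congr_deriv ?_
    rw [← hDe 3 le_rfl x hx, ← hD0]
    norm_num
    ring
  have ht : Tendsto h atTop (nhds 0) := by
    obtain ⟨M, hM⟩ := hi2
    have t1 : Tendsto (fun x => ‖D 1 x‖ ^ 2) atTop (nhds 0) := by
      have : Tendsto (D 1) atTop (nhds 0) := by
        refine hi1.congr' ?_
        filter_upwards [eventually_gt_atTop 0] with x hx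
        rw [hDe 1 (by norm_num) x hx, iteratedDeriv_one]
      simpa using this.norm.pow 2
    have t2 : Tendsto (fun x => 2 * inner ℝ (D 0 x) (D 2 x)) atTop (nhds 0) := by
      have b : Tendsto (fun x => 2 * (‖v x‖ * M)) atTop (nhds 0) := by
        simpa using (hi.norm.mul_const M).const_mul 2
      refine squeeze_zero_norm' ?_ b
      filter_upwards [eventually_ge_atTop 1] with x hx
      rw [norm_mul, hD0, hDe 2 (by norm_num) x (by linarith)]
      have h1 := norm_inner_le_norm (𝕜 := ℝ) (v x) (iteratedDeriv 2 v x)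
      have h2 := mul_le_mul_of_nonneg_left (hM x hx) (norm_nonneg (v x))
      rw [Real.norm_of_nonneg (by norm_num : (0:ℝ) ≤ 2)]
      linarith
    rw [← sub_zero (0:ℝ)]; exact t2.sub t1
  rw [integral_Ioi_of_hasDerivAt_of_tendsto hc hd hint ht]
  simp only [hh, hD0, hv0, inner_zero_left]
  have := sq_nonneg ‖D 1 0‖
  linarith

lemma adm_zero {w : ℝ → ℝ → ℂ}
    (hw : IsAdmissibleKdVSolution (fun _ => 0) (fun _ => 0) (fun _ => 0) w) :
    ∀ x t : ℝ, 0 < x → 0 < t → w x t = 0 := by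
  obtain ⟨c, e, i, b, d, Bd⟩ := hw
  have hcx : ∀ t : ℝ, 0 < t → ContinuousOn (fun x => w x t) (Ioi 0) := fun t ht =>
    (slice_x c ht).continuousOn.mono Ioi_subset_Ici_self
  have hmeas : ∀ t : ℝ, 0 < t →
      AEStronglyMeasurable (fun x => ‖w x t‖ ^ 2) (volume.restrict (Ioi 0)) := fun t ht =>
    (((hcx t ht).norm.pow 2).aestronglyMeasurable measurableSet_Ioi)
  have hintg : ∀ t : ℝ, 0 < t → IntegrableOn (fun x => ‖w x t‖ ^ 2) (Ioi 0) := by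
    intro t ht
    obtain ⟨B, hB, hB'⟩ := Bd t ht
    refine Integrable.mono' hB (hmeas t ht) ?_
    filter_upwards [ae_restrict_mem measurableSet_Ioi] with x hx
    rw [Real.norm_of_nonneg (by positivity)]
    exact (hB' x t hx ht le_rfl).1
  set E : ℝ → ℝ := fun t => ∫ x in Ioi (0:ℝ), ‖w x t‖ ^ 2 with hE
  have hEd : ∀ t : ℝ, 0 < t → ∃ E', E' ≤ 0 ∧ HasDerivAt E E' t := by
    intro t ht
    obtain ⟨B, hB, hB'⟩ := Bd (t + 1) (by linarith)
    have hceq : EqOn (fun x => 2 * inner ℝ (w x t) (deriv (fun s => w x s) t))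
        (fun x => -(2 * inner ℝ (w x t) (iteratedDeriv 3 (fun y => w y t) x))) (Ioi 0) := by
      intro x hx
      have h1 : deriv (fun s => w x s) t = - iteratedDeriv 3 (fun y => w y t) x :=
        eq_neg_of_add_eq_zero_left (e x t hx ht)
      simp only [h1, inner_neg_right]
      ring
    have hc3 : ContinuousOn (fun x => iteratedDeriv 3 (fun y => w y t) x) (Ioi 0) := by
      have h1 := ((slice_x c ht).mono Ioi_subset_Ici_self).continuousOn_iteratedDerivWithin
        (m := 3) le_rfl (uniqueDiffOn_Ioi 0)
      exact h1.congr fun x hx => (iteratedDerivWithin_of_isOpen isOpen_Ioi hx).symm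
    have key := hasDerivAt_integral_of_dominated_loc_of_deriv_le
      (μ := volume.restrict (Ioi (0:ℝ))) (F := fun t x => ‖w x t‖ ^ 2)
      (F' := fun t x => 2 * inner ℝ (w x t) (deriv (fun s => w x s) t))
      (x₀ := t) (s := Ioo 0 (t+1)) (bound := fun x => 2 * B x)
      (Ioo_mem_nhds ht (by linarith))
      (by filter_upwards [Ioi_mem_nhds ht] with s hs using hmeas s hs)
      (hintg t ht)
      (by
        have : ContinuousOn (fun x => 2 * inner ℝ (w x t) (deriv (fun s => w x s) t))
            (Ioi 0) := by
          refine ContinuousOn.congr ?_ hceq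
          exact ((ContinuousOn.inner (𝕜 := ℝ) (hcx t ht) hc3).const_mul 2).neg
        exact this.aestronglyMeasurable measurableSet_Ioi)
      (by
        filter_upwards [ae_restrict_mem measurableSet_Ioi] with x hx s hs
        obtain ⟨h1, h2⟩ := hB' x s hx hs.1 hs.2.le
        have h3 := norm_inner_le_norm (𝕜 := ℝ) (w x s) (deriv (fun r => w x r) s)
        rw [norm_mul, Real.norm_of_nonneg (by norm_num : (0:ℝ) ≤ 2)]
        nlinarith [sq_nonneg (‖w x s‖ - ‖deriv (fun r => w x r) s‖)])
      (hB.const_mul 2)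
      (by
        filter_upwards [ae_restrict_mem measurableSet_Ioi] with x hx s hs
        exact (slice_t c hx hs.1).hasDerivAt.norm_sq)
    refine ⟨_, ?_, key.2⟩
    have hi3 : IntegrableOn
        (fun x => 2 * inner ℝ (w x t) (iteratedDeriv 3 (fun y => w y t) x)) (Ioi 0) := by
      have h1 : IntegrableOn (fun x => 2 * inner ℝ (w x t) (deriv (fun s => w x s) t)) (Ioi 0) :=
        key.1
      have h2 := (h1.congr_fun hceq measurableSet_Ioi).neg
      simpa using h2
    obtain ⟨d1, d2, d3⟩ := d t ht
    have hpos := energy_1d (slice_x c ht) (b t ht) d1 d2 d3 hi3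
    rw [setIntegral_congr_fun measurableSet_Ioi hceq, integral_neg]
    linarith
  have hanti : AntitoneOn E (Ioi 0) := by
    refine antitoneOn_of_deriv_nonpos (convex_Ioi 0) ?_ ?_ ?_
    · intro t ht
      obtain ⟨E', -, h⟩ := hEd t ht
      exact h.continuousAt.continuousWithinAt
    · rw [interior_Ioi]
      intro t ht
      obtain ⟨E', -, h⟩ := hEd t ht
      exact h.differentiableAt.differentiableWithinAt
    · rw [interior_Ioi]
      intro t ht
      obtain ⟨E', h0, h⟩ := hEd t ht
      rw [h.deriv]; exact h0
  have hlim : Tendsto E (nhdsWithin 0 (Ioi 0)) (nhds 0) := by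
    obtain ⟨B, hB, hB'⟩ := Bd 1 one_pos
    have h := tendsto_integral_filter_of_dominated_convergence
      (μ := volume.restrict (Ioi (0:ℝ))) (l := nhdsWithin (0:ℝ) (Ioi 0))
      (F := fun t x => ‖w x t‖ ^ 2) (f := fun _ => (0:ℝ)) B
      (by filter_upwards [self_mem_nhdsWithin] with s hs using hmeas s hs)
      (by
        filter_upwards [Ioc_mem_nhdsGT one_pos] with s hs
        filter_upwards [ae_restrict_mem measurableSet_Ioi] with x hx
        rw [Real.norm_of_nonneg (by positivity)]
        exact (hB' x s hx hs.1 hs.2).1)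
      hB
      (by
        filter_upwards [ae_restrict_mem measurableSet_Ioi] with x hx
        simpa using (i x hx).norm.pow 2)
    simpa using h
  intro x t hx ht
  have hE0 : E t ≤ 0 := by
    refine ge_of_tendsto hlim ?_
    filter_upwards [Ioc_mem_nhdsGT ht] with s hs
    exact hanti hs.1 ht hs.2
  have hEz : E t = 0 := le_antisymm hE0 (integral_nonneg fun x => by positivity)
  have hae := (integral_eq_zero_iff_of_nonneg (fun x => by positivity) (hintg t ht)).1 hEz
  have heq := Measure.eqOn_open_of_ae_eq hae isOpen_Ioi ((hcx t ht).norm.pow 2)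
    continuousOn_const
  have := heq hx
  simpa using this

/-- Uniqueness for the forced linear KdV equation on the half-line, under the
compatibility conditions `u₀(0) = g₀(0)` and `g₀'(0) = −u₀'''(0) + f(0,0)`. -/
theorem kdv_uniqueness (u₀ : SchwartzMap ℝ ℂ) (g₀ : ℝ → ℂ)
    (hg₀ : ContDiff ℝ (⊤ : ℕ∞) g₀) (f : SchwartzMap (ℝ × ℝ) ℂ)
    (hcomp₁ : u₀ 0 = g₀ 0)
    (hcomp₂ : deriv g₀ 0 = -(deriv (deriv (deriv (u₀ : ℝ → ℂ))) 0) + f (0, 0))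
    (V W : ℝ → ℝ → ℂ)
    (hV : IsAdmissibleKdVSolution (f : ℝ × ℝ → ℂ) (u₀ : ℝ → ℂ) g₀ V)
    (hW : IsAdmissibleKdVSolution (f : ℝ × ℝ → ℂ) (u₀ : ℝ → ℂ) g₀ W) :
    ∀ x t : ℝ, 0 < x → 0 < t → V x t = W x t := by
  intro x t hx ht
  exact sub_eq_zero.1 (adm_zero (adm_sub hV hW) x t hx ht)
end
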